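/- Let m ≥ 1 and let N₁, …, N_m be positive integers with Q = N₁·N₂···N_m. Let f be a complex-valued function of multi-indices (x₁,…,x_m) with 0 ≤ x_i < N_i. Define the flattened array f̃(z) = f(x₁,…,x_m) for z = Σ_{i=1}^{m} x_i · (N₁···N_{i−1}) (empty product = 1), its 1-D DFT F₁(w) = Σ_{z=0}^{Q−1} exp(−2πi·z·w/Q)·f̃(z), and the generalized m-dimensional DFT at real frequencies F_m(a₁,…,a_m) = Σ_{x_m=0}^{N_m−1} ⋯ Σ_{x₁=0}^{N₁−1} exp(−2πi·Σ_{i=1}^{m} x_i·a_i/N_i)·f(x₁,…,x_m) for real a₁,…,a_m. Then for all integers u₁,…,u_m with 0 ≤ u_k < N_k, setting w = Σ_{k=1}^{m} u_k·(N_{k+1}···N_m) (empty product = 1), α_m = 0 and α_i = Σ_{k=i+1}^{m} u_k/(N_{i+1}···N_k) for i < m, one has F₁(w) = F_m(u₁ + α₁, u₂ + α₂, …, u_{m−1} + α_{m−1}, u_m). -/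

import Mathlib

/-!
Write `P i = ∏_{j < i} N j` and `S k = ∏_{h > k} N h`, so that `z = ∑ i, x i * P i` and
`w = ∑ k, u k * S k`, and hence `z w / Q = ∑ i, ∑ k, x i * u k * (P i * S k / Q)`.

* If `k < i`, then `P i * S k` is a multiple of `Q` (`prod_lt_mul_prod_gt_of_lt`), so the term is
  an integer and does not affect the exponential.
* If `i ≤ k`, then `P i * S k / Q` is the inverse of `N i * ∏_{i < h ≤ k} N h`
  (`prod_lt_mul_prod_gt_of_le`); these terms add up to `∑ i, x i * (u i + α i) / N i`, the diagonal
  giving the `u i` and the rest the offsets `α i`.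

Thus the two phases differ by an integer (`exists_phase_eq`). The sums then agree term by term
along the mixed-radix bijection between multi-indices and `Fin Q`, which is `finPiFinEquiv`.
-/

open Finset

/-- The total number of samples `Q = N₁·N₂···N_m`. -/
def mQ (m : ℕ) (N : Fin m → ℕ) : ℕ := ∏ i, N i

/-- The digit-order-reversed mixed-radix flattening
`w = Σ_k u_k · (N_{k+1}···N_m)` (empty product = 1). -/
def mrev (m : ℕ) (N : Fin m → ℕ) (u : Fin m → ℕ) : ℕ :=
  ∑ k, u k * ∏ h ∈ Finset.univ.filter (fun h => k < h), N h

/-- Mixed-radix digit extraction: the multi-index `(x₁,…,x_m)` of a flattened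
index `z` (so that `z = Σᵢ xᵢ · (N₁···N_{i−1})` whenever `z < Q`). -/
def munflatten (m : ℕ) (N : Fin m → ℕ) (z : ℕ) : Fin m → ℕ :=
  fun i => z / (∏ j ∈ Finset.univ.filter (fun j => j < i), N j) % N i

/-- The skew offsets `αᵢ = Σ_{k=i+1}^{m} u_k / (N_{i+1}·N_{i+2}···N_k)`
(so `α_m = 0`, the sum being empty). -/
noncomputable def malpha (m : ℕ) (N : Fin m → ℕ) (u : Fin m → ℕ) (i : Fin m) : ℝ :=
  ∑ k ∈ Finset.univ.filter (fun k => i < k),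
    (u k : ℝ) / ∏ h ∈ Finset.univ.filter (fun h => i < h ∧ h ≤ k), (N h : ℝ)

/-- One-dimensional DFT of a sequence `g` of `L` samples, evaluated at frequency `w`. -/
noncomputable def dft1 (L : ℕ) (g : ℕ → ℂ) (w : ℕ) : ℂ :=
  ∑ z ∈ Finset.range L,
    Complex.exp (-2 * Real.pi * Complex.I * (((z : ℝ) * w) / L : ℝ)) * g z

/-- Generalized `m`-dimensional DFT of the array `f` at real frequencies
`a = (a₁,…,a_m)`: the sum over all multi-indices `(x₁,…,x_m)` with `0 ≤ xᵢ < Nᵢ`. -/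
noncomputable def mdft (m : ℕ) (N : Fin m → ℕ) (f : (Fin m → ℕ) → ℂ)
    (a : Fin m → ℝ) : ℂ :=
  ∑ x ∈ Fintype.piFinset (fun i => Finset.range (N i)),
    Complex.exp (-2 * Real.pi * Complex.I * ((∑ i, (x i : ℝ) * a i / (N i : ℝ)) : ℝ)) * f x

/-- The overlap of `{h | h < i}` and `{h | k < h}` is what remains after extracting a full `Q`. -/
lemma prod_lt_mul_prod_gt_of_lt {m : ℕ} (N : Fin m → ℕ) {i k : Fin m} (hki : k < i) :
    (∏ j ∈ Finset.univ.filter (fun j => j < i), N j) *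
        (∏ h ∈ Finset.univ.filter (fun h => k < h), N h)
      = mQ m N * ∏ h ∈ Finset.univ.filter (fun h => k < h ∧ h < i), N h := by
  unfold mQ
  simp only [Finset.prod_filter, ← Finset.prod_mul_distrib]
  refine Finset.prod_congr rfl fun h _ => ?_
  by_cases h1 : h < i <;> by_cases h2 : k < h <;> simp [h1, h2]
  omega

/-- The index set splits as `{h < i} ∪ {i} ∪ {i < h ≤ k} ∪ {h > k}`. -/
lemma prod_lt_mul_prod_gt_of_le {m : ℕ} (N : Fin m → ℕ) {i k : Fin m} (hik : i ≤ k) :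
    (∏ j ∈ Finset.univ.filter (fun j => j < i), N j) *
        (∏ h ∈ Finset.univ.filter (fun h => k < h), N h) *
        (N i * ∏ h ∈ Finset.univ.filter (fun h => i < h ∧ h ≤ k), N h)
      = mQ m N := by
  have hi : N i = ∏ h, if h = i then N h else 1 := by simp
  rw [hi]
  unfold mQ
  simp only [Finset.prod_filter, ← Finset.prod_mul_distrib]
  refine Finset.prod_congr rfl fun h _ => ?_
  rcases lt_trichotomy h i with h1 | h1 | h1
  · have h2 : ¬ k < h := by omega
    have h3 : ¬ i < h := by omega
    simp [h1, h1.ne, h2, h3]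
  · subst h1
    have h2 : ¬ k < h := by omega
    simp [h2]
  · have h3 : ¬ h < i := by omega
    by_cases h2 : k < h
    · have h4 : ¬ h ≤ k := by omega
      simp [h1, h1.ne', h2, h3, h4]
    · have h4 : h ≤ k := by omega
      simp [h1, h1.ne', h2, h3, h4]

/-- The skewed frequency divided by `N i`, as a single sum over `k ≥ i` with the coefficients that
occur in `z * w / Q`. -/
lemma skew_div_eq {m : ℕ} (N : Fin m → ℕ) (hN : ∀ i, 0 < N i) (u : Fin m → ℕ) (i : Fin m) :
    ((u i : ℝ) + malpha m N u i) / (N i : ℝ)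
      = ∑ k, if i ≤ k then (u k : ℝ) *
          (((∏ j ∈ Finset.univ.filter (fun j => j < i), N j : ℕ) : ℝ) *
            ((∏ h ∈ Finset.univ.filter (fun h => k < h), N h : ℕ) : ℝ) / (mQ m N : ℝ)) else 0 := by
  have hpos : ∀ s : Finset (Fin m), ((∏ h ∈ s, N h : ℕ) : ℝ) ≠ 0 := fun s =>
    Nat.cast_ne_zero.2 (Finset.prod_pos fun h _ => hN h).ne'
  have hNi : (N i : ℝ) ≠ 0 := Nat.cast_ne_zero.2 (hN i).ne'
  have hsum : (u i : ℝ) + malpha m N u i = ∑ k, if i ≤ k then (u k : ℝ) /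
      ((∏ h ∈ Finset.univ.filter (fun h => i < h ∧ h ≤ k), N h : ℕ) : ℝ) else 0 := by
    have hself : Finset.univ.filter (fun h : Fin m => i < h ∧ h ≤ i) = ∅ := by
      ext h; simp
    rw [← Finset.add_sum_erase _ _ (Finset.mem_univ i)]
    congr 1
    · simp [hself]
    · unfold malpha
      rw [← Finset.sum_filter]
      refine Finset.sum_congr ?_ fun k _ => by push_cast; rfl
      ext k
      simp only [Finset.mem_filter, Finset.mem_erase, Finset.mem_univ, true_and, and_true]
      omega
  rw [hsum, Finset.sum_div]
  refine Finset.sum_congr rfl fun k _ => ?_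
  split_ifs with hik
  · rw [← prod_lt_mul_prod_gt_of_le N hik]
    have h1 := hpos (Finset.univ.filter (fun j => j < i))
    have h2 := hpos (Finset.univ.filter (fun h => k < h))
    have h3 := hpos (Finset.univ.filter (fun h => i < h ∧ h ≤ k))
    generalize (∏ j ∈ Finset.univ.filter (fun j => j < i), N j) = A at *
    generalize (∏ h ∈ Finset.univ.filter (fun h => k < h), N h) = B at *
    generalize (∏ h ∈ Finset.univ.filter (fun h => i < h ∧ h ≤ k), N h) = C at *
    push_cast
    field_simp
  · simp

/-- The one-dimensional phase equals the skewed multi-dimensional phase up to an integer. -/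
lemma exists_phase_eq {m : ℕ} (N : Fin m → ℕ) (hN : ∀ i, 0 < N i) (u x : Fin m → ℕ) :
    ∃ M : ℕ,
      (((∑ i, x i * ∏ j ∈ Finset.univ.filter (fun j => j < i), N j : ℕ) : ℝ) * (mrev m N u : ℝ))
          / (mQ m N : ℝ)
        = (∑ i, (x i : ℝ) * ((u i : ℝ) + malpha m N u i) / (N i : ℝ)) + M := by
  have hQ : (mQ m N : ℝ) ≠ 0 :=
    Nat.cast_ne_zero.2 (Finset.prod_pos fun h _ => hN h).ne'
  refine ⟨∑ i, ∑ k, if i ≤ k then 0 else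
    x i * u k * ∏ h ∈ Finset.univ.filter (fun h => k < h ∧ h < i), N h, ?_⟩
  unfold mrev
  rw [Nat.cast_sum, Nat.cast_sum, Nat.cast_sum, Finset.sum_mul_sum, Finset.sum_div,
    ← Finset.sum_add_distrib]
  refine Finset.sum_congr rfl fun i _ => ?_
  rw [mul_div_assoc, skew_div_eq N hN, Finset.mul_sum, Nat.cast_sum, ← Finset.sum_add_distrib,
    Finset.sum_div]
  refine Finset.sum_congr rfl fun k _ => ?_
  split_ifs with hik
  · push_cast
    ring
  · have h := congrArg (Nat.cast (R := ℝ)) (prod_lt_mul_prod_gt_of_lt N (not_le.1 hik))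
    push_cast at h ⊢
    rw [div_eq_iff hQ]
    linear_combination ((x i : ℝ) * u k) * h

lemma prod_castLE_eq {m : ℕ} (N : Fin m → ℕ) (i : Fin m) :
    ∏ j : Fin i, N (Fin.castLE i.is_lt.le j)
      = ∏ j ∈ Finset.univ.filter (fun j => j < i), N j := by
  refine Finset.prod_bij (fun j _ => Fin.castLE i.is_lt.le j) ?_ ?_ ?_ ?_
  · intro j _
    simpa using Fin.lt_def.2 j.is_lt
  · intro a _ b _ h
    simpa using h
  · intro b hb
    exact ⟨⟨b, by simpa using hb⟩, Finset.mem_univ _, rfl⟩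
  · intros; rfl

lemma munflatten_finPiFinEquiv {m : ℕ} (N : Fin m → ℕ) (x : ∀ i, Fin (N i)) :
    munflatten m N (finPiFinEquiv x : ℕ) = fun i => (x i : ℕ) := by
  funext i
  -- The inverse of `finPiFinEquiv` is digit extraction by definition.
  have h : ((finPiFinEquiv.symm (finPiFinEquiv x) i : Fin (N i)) : ℕ)
      = (finPiFinEquiv x : ℕ) / (∏ j : Fin i, N (Fin.castLE i.is_lt.le j)) % N i := rfl
  rw [Equiv.symm_apply_apply, prod_castLE_eq] at h
  exact h.symm

lemma sum_piFinset_range {m : ℕ} (N : Fin m → ℕ) (g : (Fin m → ℕ) → ℂ) :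
    ∑ x ∈ Fintype.piFinset (fun i => Finset.range (N i)), g x
      = ∑ x : ∀ i, Fin (N i), g (fun i => (x i : ℕ)) := by
  symm
  refine Finset.sum_bij (fun x _ i => (x i : ℕ)) ?_ ?_ ?_ ?_
  · intro x _
    simp
  · intro a _ b _ h
    funext i
    exact Fin.ext (congrFun h i)
  · intro b hb
    exact ⟨fun i => ⟨b i, by simpa using Fintype.mem_piFinset.1 hb i⟩, Finset.mem_univ _, rfl⟩
  · intros; rfl

/-- Eq. (3.9): the single 1-D DFT of the flattened `m`-dimensional
array, evaluated at the digit-reversed frequency index `w`, equals the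
`m`-dimensional DFT of `f` sampled on the skewed grid `(u₁+α₁, …, u_m+α_m)`
(where `α_m = 0`). -/
theorem one_dim_dft_eq_skewed_multi_dim_dft
    (m : ℕ) (hm : 1 ≤ m) (N : Fin m → ℕ) (hN : ∀ i, 0 < N i)
    (f : (Fin m → ℕ) → ℂ) (u : Fin m → ℕ) (hu : ∀ k, u k < N k) :
    dft1 (mQ m N) (fun z => f (munflatten m N z)) (mrev m N u)
      = mdft m N f (fun i => (u i : ℝ) + malpha m N u i) := by
  unfold dft1 mdft mQ
  rw [sum_piFinset_range, Finset.sum_range]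
  symm
  refine Fintype.sum_equiv (finPiFinEquiv (n := N)) _ _ fun x => ?_
  beta_reduce
  rw [munflatten_finPiFinEquiv]
  congr 1
  obtain ⟨M, hM⟩ := exists_phase_eq N hN u (fun i => (x i : ℕ))
  unfold mQ at hM
  have hz : ((finPiFinEquiv x : Fin (∏ i, N i)) : ℕ)
      = ∑ i, (x i : ℕ) * ∏ j ∈ Finset.univ.filter (fun j => j < i), N j := by
    simp only [finPiFinEquiv_apply, prod_castLE_eq]
  rw [hz, hM, Complex.exp_eq_exp_iff_exists_int]
  refine ⟨M, ?_⟩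
  push_cast
  ring
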